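/- For every l ∈ {1,…,K}, the restriction of Ψ to {1,…,2^l} is a bijection onto the collection of all subsets of {1,…,l}. -/

import Mathlib

/-- `η(k) = 1` if `k` is even and `η(k) = ν₂(k−1) + 1` if `k` is odd (used for `k ≥ 2`),
where `ν₂(m) = padicValNat 2 m` is the 2-adic valuation. -/
def eta (k : ℕ) : ℕ := if Even k then 1 else padicValNat 2 (k - 1) + 1

/-- The set-level form `Ψ` of the map `ψ` of the paper: `Ψ(1) = ∅` and
`Ψ(k) = Ψ(k−1) △ {η(k)}` for `k ≥ 2` (`Ψ(0)` is junk). -/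
def Psi : ℕ → Finset ℕ
  | 0 => ∅
  | 1 => ∅
  | k + 2 => symmDiff (Psi (k + 1)) {eta (k + 2)}

/-!
Since `ν₂(2 ^ l + j) = ν₂(j)` for `0 < j < 2 ^ l`, the steps of `Ψ` after `2 ^ l + 1` repeat those
after `1`, so `Ψ` on the second half of `{1, …, 2 ^ (l + 1)}` is its first half translated by
`Ψ(2 ^ l + 1)` under `△`. If the first half enumerates the subsets of `{1, …, l}`, then, as
`η(2 ^ l + 1) = l + 1`, the translate enumerates the subsets of `{1, …, l + 1}` containing `l + 1`.
-/

open Set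

open scoped symmDiff

theorem bijOn_union_of_disjoint {α β : Type*} {f : α → β} {s₁ s₂ : Set α} {t₁ t₂ : Set β}
    (h₁ : BijOn f s₁ t₁) (h₂ : BijOn f s₂ t₂) (ht : Disjoint t₁ t₂) :
    BijOn f (s₁ ∪ s₂) (t₁ ∪ t₂) := by
  have hne : ∀ x ∈ s₁, ∀ y ∈ s₂, f x ≠ f y := fun x hx y hy =>
    ht.ne_of_mem (h₁.mapsTo hx) (h₂.mapsTo hy)
  have hs : Disjoint s₁ s₂ := Set.disjoint_left.2 fun x hx hx' => hne x hx x hx' rfl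
  exact h₁.union h₂ ((injOn_union hs).2 ⟨h₁.injOn, h₂.injOn, hne⟩)

section Subsets

variable {α : Type*} {a : α} {s t : Finset α}

theorem disjoint_ofPred_subset_ofPred_mem (ha : a ∉ s) : Disjoint {S | S ⊆ s} {S | a ∈ S} :=
  Set.disjoint_left.2 fun _ hS haS => ha (hS haS)

variable [DecidableEq α]

theorem ofPred_subset_insert_eq_union :
    {S | S ⊆ insert a s} = {S | S ⊆ s} ∪ {S | S ⊆ insert a s ∧ a ∈ S} := by
  ext S
  have h : a ∉ S → (S ⊆ insert a s ↔ S ⊆ s) := Finset.subset_insert_iff_of_notMem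
  have h' : S ⊆ s → S ⊆ insert a s := fun hS => hS.trans (Finset.subset_insert a s)
  simp only [mem_ofPred_eq, mem_union]
  tauto

theorem bijOn_symmDiff_subset_insert (ha : a ∉ s) (hat : a ∈ t) (ht : t ⊆ insert a s) :
    BijOn (t ∆ ·) {S | S ⊆ s} {S | S ⊆ insert a s ∧ a ∈ S} := by
  have hinv : InvOn (t ∆ ·) (t ∆ ·) {S | S ⊆ s} {S | S ⊆ insert a s ∧ a ∈ S} :=
    ⟨fun S _ => symmDiff_symmDiff_cancel_left t S, fun S _ => symmDiff_symmDiff_cancel_left t S⟩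
  have hsub : ∀ {S}, S ⊆ insert a s → t ∆ S ⊆ insert a s := fun hS =>
    symmDiff_le_sup.trans (sup_le ht hS)
  refine hinv.bijOn (fun S hS => ⟨hsub (hS.trans (Finset.subset_insert a s)), ?_⟩) (fun S hS => ?_)
  · exact Finset.mem_symmDiff.2 (Or.inl ⟨hat, fun haS => ha (hS haS)⟩)
  · have hnot : a ∉ t ∆ S := by simp [Finset.mem_symmDiff, hat, hS.2]
    exact (Finset.subset_insert_iff_of_notMem hnot).1 (hsub hS.1)

end Subsets

theorem padicValNat_add_eq_right_of_lt {p a b : ℕ} (hb : b ≠ 0)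
    (h : padicValNat p b < padicValNat p a) : padicValNat p (a + b) = padicValNat p b := by
  have hp : p ≠ 1 := by
    rintro rfl
    simp at h
  have hdvd : ∀ {i}, i ≤ padicValNat p a → (p ^ i ∣ a + b ↔ p ^ i ∣ b) := fun hi =>
    Nat.dvd_add_right ((pow_dvd_pow p hi).trans pow_padicValNat_dvd)
  have hab : a + b ≠ 0 := by omega
  apply le_antisymm
  · rw [← Nat.lt_succ_iff, ← not_le, ← padicValNat_dvd_iff_le_of_ne_one hp hab, hdvd h,
      padicValNat_dvd_iff_le_of_ne_one hp hb]
    exact Nat.not_succ_le_self _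
  · rw [← padicValNat_dvd_iff_le_of_ne_one hp hab, hdvd h.le]
    exact pow_padicValNat_dvd

theorem padicValNat_lt_of_lt_pow {p l j : ℕ} (hj₀ : j ≠ 0) (hj : j < p ^ l) :
    padicValNat p j < l :=
  (padicValNat_le_nat_log j).trans_lt (Nat.log_lt_of_lt_pow hj₀ hj)

theorem padicValNat_pow_add {p l j : ℕ} [Fact p.Prime] (hj₀ : j ≠ 0) (hj : j < p ^ l) :
    padicValNat p (p ^ l + j) = padicValNat p j :=
  padicValNat_add_eq_right_of_lt hj₀ <| by
    simpa only [padicValNat.prime_pow] using padicValNat_lt_of_lt_pow hj₀ hj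

theorem eta_add_one (n : ℕ) : eta (n + 1) = padicValNat 2 n + 1 := by
  rw [eta, Nat.add_sub_cancel, ite_eq_right_iff]
  intro hn
  have hdvd : ¬ 2 ∣ n := by rwa [← even_iff_two_dvd, ← Nat.even_add_one]
  rw [padicValNat.eq_zero_of_not_dvd hdvd]

theorem Psi_one : Psi 1 = ∅ := rfl

theorem Psi_add_one {n : ℕ} (hn : n ≠ 0) :
    Psi (n + 1) = Psi n ∆ {padicValNat 2 n + 1} := by
  obtain ⟨m, rfl⟩ := Nat.exists_eq_succ_of_ne_zero hn
  rw [← eta_add_one]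
  rfl

theorem Psi_two_pow_add_one (l : ℕ) : Psi (2 ^ l + 1) = Psi (2 ^ l) ∆ {l + 1} := by
  rw [Psi_add_one (by positivity), padicValNat.prime_pow]

theorem Psi_two_pow_add {l k : ℕ} (hk : k ∈ Icc 1 (2 ^ l)) :
    Psi (2 ^ l + k) = Psi (2 ^ l + 1) ∆ Psi k := by
  obtain ⟨hk₁, hk₂⟩ := hk
  induction k, hk₁ using Nat.le_induction with
  | base => rw [Psi_one, ← Finset.bot_eq_empty, symmDiff_bot]
  | succ k hk₁ ih =>
    have hk₀ : k ≠ 0 := by omega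
    calc Psi (2 ^ l + k + 1)
        = Psi (2 ^ l + k) ∆ {padicValNat 2 (2 ^ l + k) + 1} := Psi_add_one (by omega)
      _ = (Psi (2 ^ l + 1) ∆ Psi k) ∆ {padicValNat 2 k + 1} := by
          rw [ih (by omega), padicValNat_pow_add hk₀ (by omega)]
      _ = Psi (2 ^ l + 1) ∆ Psi (k + 1) := by rw [symmDiff_assoc, Psi_add_one hk₀]

theorem bijOn_Psi_Icc_two_pow_add_one {l : ℕ}
    (h : BijOn Psi (Icc 1 (2 ^ l)) {S | S ⊆ Finset.Icc 1 l}) :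
    BijOn Psi (Icc (2 ^ l + 1) (2 ^ (l + 1)))
      {S | S ⊆ insert (l + 1) (Finset.Icc 1 l) ∧ l + 1 ∈ S} := by
  have hnot : l + 1 ∉ Finset.Icc 1 l := by simp
  have hsub : Psi (2 ^ l) ⊆ Finset.Icc 1 l := h.mapsTo ⟨Nat.one_le_two_pow, le_rfl⟩
  have htranslate : BijOn (Psi (2 ^ l + 1) ∆ ·) {S | S ⊆ Finset.Icc 1 l}
      {S | S ⊆ insert (l + 1) (Finset.Icc 1 l) ∧ l + 1 ∈ S} := by
    rw [Psi_two_pow_add_one]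
    refine bijOn_symmDiff_subset_insert hnot ?_ (symmDiff_le_sup.trans (sup_le ?_ ?_))
    · have hnot' : l + 1 ∉ Psi (2 ^ l) := fun hmem => hnot (hsub hmem)
      exact Finset.mem_symmDiff.2 (Or.inr ⟨Finset.mem_singleton_self _, hnot'⟩)
    · exact hsub.trans (Finset.subset_insert _ _)
    · simp
  have hcomp := (htranslate.comp h).congr fun k hk => (Psi_two_pow_add hk).symm
  have himage : (2 ^ l + ·) '' Icc 1 (2 ^ l) = Icc (2 ^ l + 1) (2 ^ (l + 1)) := by
    rw [image_const_add_Icc, pow_succ, mul_two]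
  rw [← himage]
  exact (bijOn_comp_iff (add_right_injective (2 ^ l)).injOn).1 hcomp

/-- For every `l ∈ {1,…,K}`, the restriction of `Ψ` to `{1,…,2^l}` is a bijection
onto the collection of all subsets of `{1,…,l}`. -/
theorem psi_bijOn (K : ℕ) : ∀ l, 1 ≤ l → l ≤ K →
    Set.BijOn Psi (Set.Icc 1 (2 ^ l)) {S : Finset ℕ | S ⊆ Finset.Icc 1 l} := by
  rintro l - -
  induction l with
  | zero => simp [Psi_one]
  | succ l ih =>
    have hdom : Icc 1 (2 ^ (l + 1)) = Icc 1 (2 ^ l) ∪ Icc (2 ^ l + 1) (2 ^ (l + 1)) := by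
      have : 2 ^ (l + 1) = 2 ^ l + 2 ^ l := by ring
      have : 1 ≤ 2 ^ l := Nat.one_le_two_pow
      ext k
      simp only [mem_union, mem_Icc]
      omega
    rw [hdom, ← Finset.insert_Icc_right_eq_Icc_add_one (by omega), ofPred_subset_insert_eq_union]
    exact bijOn_union_of_disjoint ih (bijOn_Psi_Icc_two_pow_add_one ih)
      ((disjoint_ofPred_subset_ofPred_mem (by simp)).mono_right fun _ hS => hS.2)
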